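/- arXiv:2006.10580 — 2 statements merged into one kernel-verified Lean document; each statement's English description precedes it below -/
import Mathlib

section
/- For all real numbers q ≥ 1, m ≥ 1, 0 < ρ < 1, every x ∈ ℝ², and every multi-index α = (α₁,α₂) ∈ ℕ², the brick function u_{q,m,ρ}(x) := ρ²/(ρ² + (x₁ − ρq)² + (m x₂)²) satisfies |∂^α u_{q,m,ρ}(x)|/α! ≤ ρ²·m^{α₂}·8^{|α|+1}·(u_{q,m,ρ}(x)/ρ²)^{1+|α|/2}. -/
/-!
Write `D = ρ² + (x₁ - ρq)² + (m x₂)²`, so that the brick function `u` satisfies `D u = ρ²`. As `D` is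
a quadratic polynomial without mixed term, applying `∂₁^i ∂₂^j` to this identity gives, for
`(i, j) ≠ (0, 0)`, a recurrence with five terms (`brickPd_rec`): with `c i j = ∂₁^i ∂₂^j u / (i! j!)`,
`D c i j = -(2 (x₁ - ρq) c (i-1) j + c (i-2) j + 2 m (m x₂) c i (j-1) + m² c i (j-2))`.

Since `|x₁ - ρq|` and `|m x₂|` are at most `√D`, induction on `i + j` (`abs_brickPd_le`) yields
`|c i j| ≤ ρ² m^j 8^(i+j) D^(-1-(i+j)/2)`: the four terms on the right contribute at most the
fractions `1/4`, `1/64`, `1/4`, `1/64` of the bound. This is the claim with a factor `8` to spare.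
-/

open Real Filter Topology
open scoped Classical
noncomputable section
def pd1 (f : ℝ × ℝ → ℝ) : ℝ × ℝ → ℝ := fun x => fderiv ℝ f x (1, 0)
def pd2 (f : ℝ × ℝ → ℝ) : ℝ × ℝ → ℝ := fun x => fderiv ℝ f x (0, 1)
def pd (α : ℕ × ℕ) (f : ℝ × ℝ → ℝ) : ℝ × ℝ → ℝ := pd1^[α.1] (pd2^[α.2] f)
def LogConvexSeq (M : ℕ → ℝ) : Prop := Monotone (fun k => M (k + 1) / M k)
def MemDC (M : ℕ → ℝ) (f : ℝ × ℝ → ℝ) : Prop :=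
  ContDiff ℝ (⊤ : ℕ∞) f ∧
  ∀ K : Set (ℝ × ℝ), IsCompact K →
    ∃ A > (0:ℝ), ∃ B > (0:ℝ), ∀ x ∈ K, ∀ α : ℕ × ℕ,
      |pd α f x| ≤ A * B ^ (α.1 + α.2) * (Nat.factorial α.1 * Nat.factorial α.2) * M (α.1 + α.2)
def blowup : ℝ × ℝ → ℝ × ℝ := fun p => (p.1 * Real.cos p.2, p.1 * Real.sin p.2)
def ostrowski (M : ℕ → ℝ) (r : ℝ) : ℝ := ⨆ n : ℕ, r ^ (n + 2) / M n
def baseH (M : ℕ → ℝ) (x : ℝ × ℝ) : ℝ :=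
  ∑' k : ℕ,
    (M (k + 2) / M (k + 1)) ^ 2 / (2 ^ (k + 1) * ostrowski M (M (k + 2) / M (k + 1))) *
      (1 / (x.1 ^ 2 + (M (k + 2) / M (k + 1) * x.2) ^ 2 + 1))
def blockF (M : ℕ → ℝ) (q ρ : ℝ) (x : ℝ × ℝ) : ℝ := baseH M (x.1 / ρ - q, x.2 / ρ)
def rhoSeq (M : ℕ → ℝ) (n : ℕ) : ℝ := M n / M (n + 1)
def FGamma (M : ℕ → ℝ) (E : ℝ → ℝ) (Λ : Set ℕ) (x : ℝ × ℝ) : ℝ :=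
  ∑' l : ℕ, Set.indicator Λ
    (fun l => blockF M (E (rhoSeq M l) / rhoSeq M l) (rhoSeq M l) x /
      (ostrowski M (rhoSeq M l)⁻¹ * 2 ^ l)) l

/-- The derivative of `f` in the fixed direction `v`; `pd1` and `pd2` are the cases
`v = (1, 0)` and `v = (0, 1)`. -/
def dirD (v : ℝ × ℝ) (f : ℝ × ℝ → ℝ) : ℝ × ℝ → ℝ := fun x => fderiv ℝ f x v

lemma smooth_add {f g : ℝ × ℝ → ℝ} (hf : ContDiff ℝ (⊤ : ℕ∞) f)
    (hg : ContDiff ℝ (⊤ : ℕ∞) g) : ContDiff ℝ (⊤ : ℕ∞) (f + g) := hf.add hg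

lemma smooth_mul {f g : ℝ × ℝ → ℝ} (hf : ContDiff ℝ (⊤ : ℕ∞) f)
    (hg : ContDiff ℝ (⊤ : ℕ∞) g) : ContDiff ℝ (⊤ : ℕ∞) (f * g) := hf.mul hg

lemma contDiff_dirD (v : ℝ × ℝ) {f : ℝ × ℝ → ℝ} (hf : ContDiff ℝ (⊤ : ℕ∞) f) :
    ContDiff ℝ (⊤ : ℕ∞) (dirD v f) :=
  (hf.fderiv_right (m := (⊤ : ℕ∞)) (by simp)).clm_apply contDiff_const

lemma contDiff_iterate_dirD (v : ℝ × ℝ) {f : ℝ × ℝ → ℝ} (hf : ContDiff ℝ (⊤ : ℕ∞) f) (n : ℕ) :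
    ContDiff ℝ (⊤ : ℕ∞) ((dirD v)^[n] f) := by
  induction n with
  | zero => exact hf
  | succ n ih => rw [Function.iterate_succ_apply']; exact contDiff_dirD v ih

lemma dirD_add (v : ℝ × ℝ) {f g : ℝ × ℝ → ℝ} (hf : ContDiff ℝ (⊤ : ℕ∞) f)
    (hg : ContDiff ℝ (⊤ : ℕ∞) g) : dirD v (f + g) = dirD v f + dirD v g := by
  funext x
  have h1 := hf.differentiable (by simp) x
  have h2 := hg.differentiable (by simp) x
  simp [dirD, fderiv_add h1 h2]

lemma dirD_mul (v : ℝ × ℝ) {f g : ℝ × ℝ → ℝ} (hf : ContDiff ℝ (⊤ : ℕ∞) f)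
    (hg : ContDiff ℝ (⊤ : ℕ∞) g) : dirD v (f * g) = dirD v f * g + f * dirD v g := by
  funext x
  have h1 := hf.differentiable (by simp) x
  have h2 := hg.differentiable (by simp) x
  simp [dirD, fderiv_mul h1 h2]
  ring

lemma dirD_const (v : ℝ × ℝ) (c : ℝ) : dirD v (fun _ => c) = 0 := by
  funext x
  simp [dirD]

lemma iterate_dirD_add (v : ℝ × ℝ) {f g : ℝ × ℝ → ℝ} (hf : ContDiff ℝ (⊤ : ℕ∞) f)
    (hg : ContDiff ℝ (⊤ : ℕ∞) g) (n : ℕ) :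
    (dirD v)^[n] (f + g) = (dirD v)^[n] f + (dirD v)^[n] g := by
  induction n with
  | zero => rfl
  | succ n ih =>
    simp only [Function.iterate_succ_apply']
    rw [ih, dirD_add v (contDiff_iterate_dirD v hf n) (contDiff_iterate_dirD v hg n)]

lemma iterate_dirD_const (v : ℝ × ℝ) (c : ℝ) (n : ℕ) :
    (dirD v)^[n + 1] (fun _ => c) = 0 := by
  induction n with
  | zero => exact dirD_const v c
  | succ n ih => rw [Function.iterate_succ_apply', ih]; exact dirD_const v 0

/-- Leibniz rule for a factor `w` that is quadratic in the direction `v`, with first derivative `l`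
and constant second derivative `2 * c`. For `n = 0, 1` the truncated subtractions are harmless, as
the corresponding coefficients vanish. -/
lemma iterate_dirD_mul (v : ℝ × ℝ) {w l f : ℝ × ℝ → ℝ} {c : ℝ}
    (hw : ContDiff ℝ (⊤ : ℕ∞) w) (hl : ContDiff ℝ (⊤ : ℕ∞) l) (hf : ContDiff ℝ (⊤ : ℕ∞) f)
    (hwl : dirD v w = l) (hlc : dirD v l = fun _ => 2 * c) (n : ℕ) :
    (dirD v)^[n] (w * f) = w * (dirD v)^[n] f + (fun _ => (n : ℝ)) * (l * (dirD v)^[n - 1] f)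
      + (fun _ => (n : ℝ) * ((n : ℝ) - 1) * c) * (dirD v)^[n - 2] f := by
  induction n with
  | zero => funext x; simp
  | succ n ih =>
    have hF := contDiff_iterate_dirD v hf
    rw [Function.iterate_succ_apply', ih,
      dirD_add v (smooth_add (smooth_mul hw (hF _)) (smooth_mul contDiff_const (smooth_mul hl (hF _))))
        (smooth_mul contDiff_const (hF _)),
      dirD_add v (smooth_mul hw (hF _)) (smooth_mul contDiff_const (smooth_mul hl (hF _))),
      dirD_mul v hw (hF _), dirD_mul v contDiff_const (smooth_mul hl (hF _)), dirD_mul v hl (hF _),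
      dirD_mul v contDiff_const (hF _), dirD_const, dirD_const, hwl, hlc]
    simp only [← Function.iterate_succ_apply' (dirD v)]
    funext x
    rcases n with _ | _ | n
    · simp; ring
    · simp; ring
    · simp; ring

/-- Leibniz rule for a factor that is constant in the direction `v`. -/
lemma iterate_dirD_mul_of_dirD_eq_zero (v : ℝ × ℝ) {w f : ℝ × ℝ → ℝ}
    (hw : ContDiff ℝ (⊤ : ℕ∞) w) (hf : ContDiff ℝ (⊤ : ℕ∞) f) (hw0 : dirD v w = 0) (n : ℕ) :
    (dirD v)^[n] (w * f) = w * (dirD v)^[n] f := by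
  have h := iterate_dirD_mul v (c := 0) hw (l := 0) contDiff_const hf hw0
    (by rw [mul_zero]; exact dirD_const v 0) n
  rw [h]
  funext x
  simp

/-- The denominator of the brick function. -/
def brickDen (q m ρ : ℝ) : ℝ × ℝ → ℝ :=
  fun y => ρ ^ 2 + (y.1 - ρ * q) ^ 2 + (m * y.2) ^ 2

/-- The brick function. -/
def brick (q m ρ : ℝ) : ℝ × ℝ → ℝ :=
  fun y => ρ ^ 2 / (ρ ^ 2 + (y.1 - ρ * q) ^ 2 + (m * y.2) ^ 2)

lemma dirD_fst (v : ℝ × ℝ) : dirD v (fun y => y.1) = fun _ => v.1 := by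
  funext x
  change fderiv ℝ Prod.fst x v = v.1
  rw [fderiv_fst]; rfl

lemma dirD_snd (v : ℝ × ℝ) : dirD v (fun y => y.2) = fun _ => v.2 := by
  funext x
  change fderiv ℝ Prod.snd x v = v.2
  rw [fderiv_snd]; rfl

lemma dirD_affine (v : ℝ × ℝ) (a b c : ℝ) :
    dirD v (fun y => a * y.1 + b * y.2 + c) = fun _ => a * v.1 + b * v.2 := by
  have h : (fun y : ℝ × ℝ => a * y.1 + b * y.2 + c)
      = ((fun _ => a) * (fun y => y.1) + (fun _ => b) * (fun y => y.2)) + fun _ => c := rfl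
  rw [h, dirD_add v (smooth_add (smooth_mul contDiff_const contDiff_fst)
      (smooth_mul contDiff_const contDiff_snd)) contDiff_const,
    dirD_add v (smooth_mul contDiff_const contDiff_fst) (smooth_mul contDiff_const contDiff_snd),
    dirD_mul v contDiff_const contDiff_fst, dirD_mul v contDiff_const contDiff_snd,
    dirD_fst, dirD_snd]
  simp only [dirD_const]
  funext x
  simp

lemma dirD_brickDen (q m ρ : ℝ) (v : ℝ × ℝ) :
    dirD v (brickDen q m ρ)
      = fun y => 2 * v.1 * (y.1 - ρ * q) + 2 * v.2 * m * (m * y.2) := by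
  have hA : ContDiff ℝ (⊤ : ℕ∞) (fun y : ℝ × ℝ => 1 * y.1 + 0 * y.2 + (-(ρ * q))) := by fun_prop
  have hB : ContDiff ℝ (⊤ : ℕ∞) (fun y : ℝ × ℝ => 0 * y.1 + m * y.2 + 0) := by fun_prop
  have h : brickDen q m ρ = ((fun _ => ρ ^ 2)
      + (fun y : ℝ × ℝ => 1 * y.1 + 0 * y.2 + (-(ρ * q)))
        * (fun y : ℝ × ℝ => 1 * y.1 + 0 * y.2 + (-(ρ * q))))
      + (fun y : ℝ × ℝ => 0 * y.1 + m * y.2 + 0) * (fun y : ℝ × ℝ => 0 * y.1 + m * y.2 + 0) := by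
    funext y
    simp [brickDen]; ring
  rw [h, dirD_add v (smooth_add contDiff_const (smooth_mul hA hA)) (smooth_mul hB hB),
    dirD_add v contDiff_const (smooth_mul hA hA), dirD_mul v hA hA, dirD_mul v hB hB,
    dirD_affine, dirD_affine, dirD_const]
  funext x
  simp; ring

lemma brickDen_pos (q m : ℝ) {ρ : ℝ} (hρ : 0 < ρ) (y : ℝ × ℝ) : 0 < brickDen q m ρ y := by
  unfold brickDen
  positivity

lemma contDiff_brickDen (q m ρ : ℝ) : ContDiff ℝ (⊤ : ℕ∞) (brickDen q m ρ) := by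
  unfold brickDen
  fun_prop

lemma contDiff_brick (q m : ℝ) {ρ : ℝ} (hρ : 0 < ρ) : ContDiff ℝ (⊤ : ℕ∞) (brick q m ρ) :=
  contDiff_const.div (contDiff_brickDen q m ρ) fun y => (brickDen_pos q m hρ y).ne'

lemma brickDen_mul_brick (q m : ℝ) {ρ : ℝ} (hρ : 0 < ρ) :
    brickDen q m ρ * brick q m ρ = fun _ => ρ ^ 2 := by
  funext y
  exact mul_div_cancel₀ _ (ne_of_gt (brickDen_pos q m hρ y))

/-- The partial derivative `∂₁^i ∂₂^j` of the brick function. -/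
def brickPd (q m ρ : ℝ) (i j : ℕ) : ℝ × ℝ → ℝ :=
  (dirD (1, 0))^[i] ((dirD (0, 1))^[j] (brick q m ρ))

/-- The recurrence obtained by applying `∂₁^i ∂₂^j` to `brickDen * brick = ρ²`. -/
lemma brickPd_rec (q m : ℝ) {ρ : ℝ} (hρ : 0 < ρ) (i j : ℕ) (x : ℝ × ℝ) (hij : i + j ≠ 0) :
    brickDen q m ρ x * brickPd q m ρ i j x
      = -(2 * (x.1 - ρ * q) * (i * brickPd q m ρ (i - 1) j x)
        + i * ((i : ℝ) - 1) * brickPd q m ρ (i - 2) j x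
        + 2 * m * (m * x.2) * (j * brickPd q m ρ i (j - 1) x)
        + m ^ 2 * (j * ((j : ℝ) - 1) * brickPd q m ρ i (j - 2) x)) := by
  have hD := contDiff_brickDen q m ρ
  have hu := contDiff_brick q m hρ
  have hG := contDiff_iterate_dirD (0, 1) hu
  -- `∂₁^i ∂₂^j` annihilates the constant `ρ²`.
  have h0 : (dirD (1, 0))^[i] ((dirD (0, 1))^[j] (brickDen q m ρ * brick q m ρ)) = 0 := by
    rw [brickDen_mul_brick q m hρ]
    rcases j with _ | j
    · rcases i with _ | i
      · simp at hij
      · exact iterate_dirD_const _ _ i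
    · rw [iterate_dirD_const]
      rcases i with _ | i
      · rfl
      · exact iterate_dirD_const _ 0 i
  have hl1 : ContDiff ℝ (⊤ : ℕ∞) (fun y : ℝ × ℝ => 2 * y.1 + 0 * y.2 + (-(2 * (ρ * q)))) := by
    fun_prop
  have hl2 : ContDiff ℝ (⊤ : ℕ∞) (fun y : ℝ × ℝ => 0 * y.1 + 2 * m * m * y.2 + 0) := by
    fun_prop
  have e2 := iterate_dirD_mul (0, 1) (c := m ^ 2) hD hl2 hu
    (by rw [dirD_brickDen]; funext y; simp; ring)
    (by rw [dirD_affine]; funext y; simp; ring) j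
  have e1 := iterate_dirD_mul (1, 0) (c := 1) hD hl1 (hG j)
    (by rw [dirD_brickDen]; funext y; simp; ring)
    (by rw [dirD_affine]; funext y; simp) i
  rw [e2, iterate_dirD_add _ (smooth_add (smooth_mul hD (hG _))
      (smooth_mul contDiff_const (smooth_mul hl2 (hG _))))
      (smooth_mul contDiff_const (hG _)),
    iterate_dirD_add _ (smooth_mul hD (hG _)) (smooth_mul contDiff_const (smooth_mul hl2 (hG _))), e1,
    iterate_dirD_mul_of_dirD_eq_zero _ contDiff_const (smooth_mul hl2 (hG _)) (dirD_const _ _),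
    iterate_dirD_mul_of_dirD_eq_zero _ hl2 (hG _) (by rw [dirD_affine]; funext y; simp),
    iterate_dirD_mul_of_dirD_eq_zero _ contDiff_const (hG _) (dirD_const _ _)] at h0
  have h := congrFun h0 x
  simp only [Pi.add_apply, Pi.mul_apply, Pi.zero_apply] at h
  simp only [brickPd]
  linear_combination h

/-- The bound for `∂₁^i ∂₂^j` of the brick function at a point where the denominator is `r⁻²`. -/
def brickBd (m ρ r : ℝ) (i j : ℕ) : ℝ :=
  ρ ^ 2 * m ^ j * 8 ^ (i + j) * r ^ (i + j + 2) * (i.factorial * j.factorial)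

lemma brickBd_succ_left (m ρ r : ℝ) (i j : ℕ) :
    brickBd m ρ r (i + 1) j = 8 * r * ((i + 1 : ℝ) * brickBd m ρ r i j) := by
  simp only [brickBd, Nat.factorial_succ]
  push_cast
  ring

lemma brickBd_succ_right (m ρ r : ℝ) (i j : ℕ) :
    brickBd m ρ r i (j + 1) = 8 * r * m * ((j + 1 : ℝ) * brickBd m ρ r i j) := by
  simp only [brickBd, Nat.factorial_succ]
  push_cast
  ring

lemma brickBd_nonneg {m ρ r : ℝ} (hm : 0 ≤ m) (hr : 0 ≤ r) (i j : ℕ) :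
    0 ≤ brickBd m ρ r i j := by
  unfold brickBd
  positivity

/-- The estimate, by induction on `i + j` from the recurrence. The constant `8` enters through
`2 * (2 / 8) + 2 * (1 / 8 ^ 2) ≤ 1`. -/
lemma abs_brickPd_le (q : ℝ) {m ρ : ℝ} (hm : 0 < m) (hρ : 0 < ρ) (x : ℝ × ℝ) {s r : ℝ}
    (hs : 0 < s) (hsD : s ^ 2 = brickDen q m ρ x) (hrs : r * s = 1) (n : ℕ) :
    ∀ i j : ℕ, i + j = n → |brickPd q m ρ i j x| ≤ brickBd m ρ r i j := by
  have hr : 0 < r := pos_of_mul_pos_left (hrs ▸ one_pos) hs.le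
  have hB := brickBd_nonneg (ρ := ρ) hm.le hr.le
  have ha : |x.1 - ρ * q| ≤ s := abs_le_of_sq_le_sq (by
    rw [hsD, brickDen]; nlinarith [sq_nonneg ρ, sq_nonneg (m * x.2)]) hs.le
  have hb : |m * x.2| ≤ s := abs_le_of_sq_le_sq (by
    rw [hsD, brickDen]; nlinarith [sq_nonneg ρ, sq_nonneg (x.1 - ρ * q)]) hs.le
  induction n using Nat.strong_induction_on with
  | _ n ih =>
    intro i j hn
    rcases Nat.eq_zero_or_pos n with h0 | hpos
    · obtain ⟨rfl, rfl⟩ : i = 0 ∧ j = 0 := by omega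
      have h1 : brickPd q m ρ 0 0 x = ρ ^ 2 / s ^ 2 := by rw [hsD]; rfl
      have h2 : r = 1 / s := by field_simp; exact hrs
      rw [h1, abs_of_nonneg (by positivity)]
      simp [brickBd, h2, div_eq_mul_inv]
    · have hrec := brickPd_rec q m hρ i j x (by omega)
      -- The four terms of the recurrence are at most `1/4`, `1/64`, `1/4` and `1/64` of `s² B`.
      have t1 : |2 * (x.1 - ρ * q) * (i * brickPd q m ρ (i - 1) j x)|
          ≤ s ^ 2 / 4 * brickBd m ρ r i j := by
        rcases i with _ | i
        · simpa using mul_nonneg (by positivity) (hB 0 j)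
        · have h := ih (i + j) (by omega) i j rfl
          calc _ = 2 * |x.1 - ρ * q| * ((i + 1 : ℝ) * |brickPd q m ρ i j x|) := by
                rw [abs_mul, abs_mul, abs_mul, Nat.abs_cast]; simp
            _ ≤ 2 * s * ((i + 1 : ℝ) * brickBd m ρ r i j) := by gcongr
            _ = _ := by
                rw [brickBd_succ_left]
                linear_combination (-2 * s * ((i + 1 : ℝ) * brickBd m ρ r i j)) * hrs
      have t2 : |i * ((i : ℝ) - 1) * brickPd q m ρ (i - 2) j x|
          ≤ s ^ 2 / 64 * brickBd m ρ r i j := by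
        rcases i with _ | _ | i
        · simpa using mul_nonneg (by positivity) (hB 0 j)
        · simpa using mul_nonneg (by positivity) (hB 1 j)
        · have h := ih (i + j) (by omega) i j rfl
          calc _ = ((i + 1 : ℝ) * (i + 2)) * |brickPd q m ρ i j x| := by
                rw [abs_mul, abs_of_nonneg]
                · push_cast; ring
                · push_cast; ring_nf; positivity
            _ ≤ ((i + 1 : ℝ) * (i + 2)) * brickBd m ρ r i j := by gcongr
            _ = _ := by
                rw [brickBd_succ_left, brickBd_succ_left]
                push_cast
                linear_combination (-(r * s + 1) * (((i + 1 : ℝ) * (i + 2)) * brickBd m ρ r i j))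
                  * hrs
      have t3 : |2 * m * (m * x.2) * (j * brickPd q m ρ i (j - 1) x)|
          ≤ s ^ 2 / 4 * brickBd m ρ r i j := by
        rcases j with _ | j
        · simpa using mul_nonneg (by positivity) (hB i 0)
        · have h := ih (i + j) (by omega) i j rfl
          calc _ = 2 * m * |m * x.2| * ((j + 1 : ℝ) * |brickPd q m ρ i j x|) := by
                rw [abs_mul, abs_mul (2 * m), abs_mul (_ : ℝ) (brickPd _ _ _ _ _ _), Nat.abs_cast,
                  abs_of_pos (by positivity : 0 < 2 * m)]
                simp
            _ ≤ 2 * m * s * ((j + 1 : ℝ) * brickBd m ρ r i j) := by gcongr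
            _ = _ := by
                rw [brickBd_succ_right]
                linear_combination (-2 * m * s * ((j + 1 : ℝ) * brickBd m ρ r i j)) * hrs
      have t4 : |m ^ 2 * (j * ((j : ℝ) - 1) * brickPd q m ρ i (j - 2) x)|
          ≤ s ^ 2 / 64 * brickBd m ρ r i j := by
        rcases j with _ | _ | j
        · simpa using mul_nonneg (by positivity) (hB i 0)
        · simpa using mul_nonneg (by positivity) (hB i 1)
        · have h := ih (i + j) (by omega) i j rfl
          calc _ = m ^ 2 * (((j + 1 : ℝ) * (j + 2)) * |brickPd q m ρ i j x|) := by
                rw [abs_mul, abs_mul, abs_of_pos (by positivity : 0 < m ^ 2), abs_of_nonneg]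
                · push_cast; ring
                · push_cast; ring_nf; positivity
            _ ≤ m ^ 2 * (((j + 1 : ℝ) * (j + 2)) * brickBd m ρ r i j) := by gcongr
            _ = _ := by
                rw [brickBd_succ_right, brickBd_succ_right]
                push_cast
                linear_combination
                  (-(r * s + 1) * m ^ 2 * (((j + 1 : ℝ) * (j + 2)) * brickBd m ρ r i j)) * hrs
      have hsq : 0 < s ^ 2 := by positivity
      refine le_of_mul_le_mul_left ?_ hsq
      rw [← abs_of_pos hsq, ← abs_mul, abs_of_pos hsq, hsD, hrec, abs_neg, ← hsD]
      have hnn := mul_nonneg hsq.le (hB i j)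
      refine (abs_add_le _ _).trans ?_
      refine (add_le_add ((abs_add_le _ _).trans (add_le_add (abs_add_le _ _) le_rfl)) le_rfl).trans
        ?_
      linarith

/-- Remark 3.4 (a priori estimate on the brick function): for
`u_{q,m,ρ}(x) = ρ²/(ρ² + (x₁ - ρq)² + (m x₂)²)`,
`|∂^α u(x)|/α! ≤ ρ² m^{α₂} 8^{|α|+1} (u(x)/ρ²)^{1+|α|/2}`. -/
theorem brick_estimate (q m ρ : ℝ) (hq : 1 ≤ q) (hm : 1 ≤ m) (hρ0 : 0 < ρ) (hρ1 : ρ < 1)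
    (x : ℝ × ℝ) (α : ℕ × ℕ) :
    |pd α (fun y : ℝ × ℝ => ρ ^ 2 / (ρ ^ 2 + (y.1 - ρ * q) ^ 2 + (m * y.2) ^ 2)) x| /
      (Nat.factorial α.1 * Nat.factorial α.2) ≤
    ρ ^ 2 * m ^ α.2 * 8 ^ (α.1 + α.2 + 1) *
      (ρ ^ 2 / (ρ ^ 2 + (x.1 - ρ * q) ^ 2 + (m * x.2) ^ 2) / ρ ^ 2) ^
        (1 + ((α.1 + α.2 : ℕ) : ℝ) / 2) := by
  have hD := brickDen_pos q m hρ0 x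
  have hm0 : 0 < m := by linarith
  set s := √(brickDen q m ρ x) with hs_def
  have hs : 0 < s := Real.sqrt_pos.2 hD
  have hsD : s ^ 2 = brickDen q m ρ x := Real.sq_sqrt hD.le
  have key := abs_brickPd_le q hm0 hρ0 x hs hsD (inv_mul_cancel₀ hs.ne') _ α.1 α.2 rfl
  have hpow : (ρ ^ 2 / (ρ ^ 2 + (x.1 - ρ * q) ^ 2 + (m * x.2) ^ 2) / ρ ^ 2) ^
      (1 + ((α.1 + α.2 : ℕ) : ℝ) / 2) = s⁻¹ ^ (α.1 + α.2 + 2) := by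
    have h1 : ρ ^ 2 / (ρ ^ 2 + (x.1 - ρ * q) ^ 2 + (m * x.2) ^ 2) / ρ ^ 2 = s⁻¹ ^ (2 : ℝ) := by
      have h2 : ρ ^ 2 + (x.1 - ρ * q) ^ 2 + (m * x.2) ^ 2 = s ^ 2 := hsD.symm
      rw [h2, Real.rpow_ofNat]
      field_simp
    rw [h1, ← Real.rpow_mul (by positivity), ← Real.rpow_natCast]
    congr 1
    push_cast
    ring
  rw [hpow, div_le_iff₀ (by positivity)]
  refine key.trans ?_
  unfold brickBd
  have h8 : (8 : ℝ) ^ (α.1 + α.2) ≤ 8 ^ (α.1 + α.2 + 1) :=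
    pow_le_pow_right₀ (by norm_num) (Nat.le_succ _)
  gcongr
end
end

section
/- Let M = (M_k) be a nondecreasing logarithmically convex sequence of positive real numbers with M_0 = 1. Then there exists a C^∞ function h : ℝ² → ℝ such that: (i) for every x = (x₁,x₂) ∈ ℝ² and every multi-index α = (α₁,α₂) ∈ ℕ², |∂^α h(x)| ≤ 64·8^{|α|+1}·α!·M_{α₂}/(1 + x₁² + x₂²)^{1+|α|/2}; and (ii) for every n ∈ ℕ, |∂^{2n}h/∂x₂^{2n}(0,0)| ≥ (2n)!·M_{2n}/2^{2n}. -/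
/-!
With `m k = M (k+1) / M k`, a nondecreasing sequence of numbers `≥ 1`, the function is
`h = ∑ c k * g (m k)`, where `g m x = 1 / (1 + x₁² + m² x₂²)` and
`c k = 2⁻ᵏ * M k / (m k) ^ k`.

* Applying `∂₁^i ∂₂^j` to `Q * g m = 1`, with `Q` the quadratic denominator, gives a linear
  recurrence for the partial derivatives of `g m` (`kernel_recurrence`). By induction on `i + j` it
  yields `|∂^(i,j) (g m)| ≤ i! j! 8^(i+j) m^j / Q^(1+(i+j)/2)` (`kernel_bound`), and at the origin
  `∂₂^(2n) (g m) = (-1)^n (2n)! m^(2n)` (`kernel_origin`).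
* Log-convexity gives `c k * (m k) ^ j ≤ 2⁻ᵏ * M j` for all `k` and `j`, with equality for `k = j`
  (`weight_mul_pow_le`, `weight_mul_pow_self`). The upper bound makes all the differentiated series
  converge uniformly, so `h` is smooth, may be differentiated termwise, and satisfies (i).
  At the origin the terms of the series of `∂₂^(2n) h` all have the sign `(-1)^n`, so the
  single term `k = 2n` already gives (ii).
-/

open Real Filter Topology
open scoped Classical
noncomputable section
/-! ### Partial derivatives -/

lemma pd1_contDiff {f : ℝ × ℝ → ℝ} (hf : ContDiff ℝ (⊤ : ℕ∞) f) :
    ContDiff ℝ (⊤ : ℕ∞) (pd1 f) :=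
  (hf.fderiv_right (m := (⊤ : ℕ∞)) (by norm_cast)).clm_apply contDiff_const

lemma pd2_contDiff {f : ℝ × ℝ → ℝ} (hf : ContDiff ℝ (⊤ : ℕ∞) f) :
    ContDiff ℝ (⊤ : ℕ∞) (pd2 f) :=
  (hf.fderiv_right (m := (⊤ : ℕ∞)) (by norm_cast)).clm_apply contDiff_const

lemma pd_succ_left (i j : ℕ) (f : ℝ × ℝ → ℝ) : pd (i + 1, j) f = pd1 (pd (i, j) f) := by
  simp only [pd, Function.iterate_succ_apply']

lemma pd_zero_succ (j : ℕ) (f : ℝ × ℝ → ℝ) : pd (0, j + 1) f = pd2 (pd (0, j) f) := by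
  simp only [pd, Function.iterate_succ_apply', Function.iterate_zero, id]

lemma pd_contDiff {f : ℝ × ℝ → ℝ} (hf : ContDiff ℝ (⊤ : ℕ∞) f) (i j : ℕ) :
    ContDiff ℝ (⊤ : ℕ∞) (pd (i, j) f) := by
  induction i with
  | zero =>
    induction j with
    | zero => exact hf
    | succ j ih => rw [pd_zero_succ]; exact pd2_contDiff ih
  | succ i ih => rw [pd_succ_left]; exact pd1_contDiff ih

lemma pd1_pd2_comm {f : ℝ × ℝ → ℝ} (hf : ContDiff ℝ (⊤ : ℕ∞) f) :
    pd2 (pd1 f) = pd1 (pd2 f) := by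
  funext x
  have hd : DifferentiableAt ℝ (fderiv ℝ f) x :=
    ((hf.fderiv_right (m := (⊤ : ℕ∞)) (by norm_cast)).differentiable (by simp)) x
  have hs : IsSymmSndFDerivAt ℝ f x :=
    (contDiff_infty.1 hf 2).contDiffAt.isSymmSndFDerivAt (by simp)
  have key : ∀ v w : ℝ × ℝ, fderiv ℝ (fun y => fderiv ℝ f y v) x w
      = fderiv ℝ (fderiv ℝ f) x w v := by
    intro v w
    have := (hd.hasFDerivAt.clm_apply (hasFDerivAt_const v x)).fderiv
    rw [this]; simp
  change fderiv ℝ (fun y => fderiv ℝ f y (1, 0)) x (0, 1)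
    = fderiv ℝ (fun y => fderiv ℝ f y (0, 1)) x (1, 0)
  rw [key, key]
  exact hs.eq _ _

lemma pd_succ_right {f : ℝ × ℝ → ℝ} (hf : ContDiff ℝ (⊤ : ℕ∞) f) (i j : ℕ) :
    pd (i, j + 1) f = pd2 (pd (i, j) f) := by
  induction i with
  | zero => exact pd_zero_succ j f
  | succ i ih =>
    rw [pd_succ_left, ih, pd_succ_left, pd1_pd2_comm (pd_contDiff hf i j)]

/-- The linear functional `(v₁, v₂) ↦ a v₁ + b v₂`. -/
def rowCLM (a b : ℝ) : ℝ × ℝ →L[ℝ] ℝ :=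
  a • ContinuousLinearMap.fst ℝ ℝ ℝ + b • ContinuousLinearMap.snd ℝ ℝ ℝ

lemma rowCLM_apply (a b : ℝ) (v : ℝ × ℝ) : rowCLM a b v = a * v.1 + b * v.2 := by
  simp [rowCLM]

lemma norm_rowCLM_le (a b : ℝ) : ‖rowCLM a b‖ ≤ |a| + |b| := by
  refine ContinuousLinearMap.opNorm_le_bound _ (by positivity) fun v => ?_
  rw [rowCLM_apply]
  have h1 : |v.1| ≤ ‖v‖ := norm_fst_le v
  have h2 : |v.2| ≤ ‖v‖ := norm_snd_le v
  calc ‖a * v.1 + b * v.2‖ ≤ |a| * |v.1| + |b| * |v.2| := by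
        rw [Real.norm_eq_abs, ← abs_mul, ← abs_mul]; exact abs_add_le _ _
    _ ≤ |a| * ‖v‖ + |b| * ‖v‖ := by gcongr
    _ = _ := by ring

lemma hasFDerivAt_rowCLM {f : ℝ × ℝ → ℝ} (hf : ContDiff ℝ (⊤ : ℕ∞) f) (x : ℝ × ℝ) :
    HasFDerivAt f (rowCLM (pd1 f x) (pd2 f x)) x := by
  have h := (hf.differentiable (by simp) x).hasFDerivAt
  have e : fderiv ℝ f x = rowCLM (pd1 f x) (pd2 f x) := by
    ext <;> simp [rowCLM, pd1, pd2]
  rwa [e] at h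

lemma hasDerivAt_fst {f : ℝ × ℝ → ℝ} (hf : ContDiff ℝ (⊤ : ℕ∞) f) (a b : ℝ) :
    HasDerivAt (fun t => f (t, b)) (pd1 f (a, b)) a := by
  have h := (hf.differentiable (by simp) (a, b)).hasFDerivAt
  exact HasFDerivAt.comp_hasDerivAt a h ((hasDerivAt_id a).prodMk (hasDerivAt_const a b))

lemma hasDerivAt_snd {f : ℝ × ℝ → ℝ} (hf : ContDiff ℝ (⊤ : ℕ∞) f) (a b : ℝ) :
    HasDerivAt (fun t => f (a, t)) (pd2 f (a, b)) b := by
  have h := (hf.differentiable (by simp) (a, b)).hasFDerivAt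
  exact HasFDerivAt.comp_hasDerivAt b h ((hasDerivAt_const b a).prodMk (hasDerivAt_id b))

/-! ### The rational kernel -/

/-- The rational function `1 / (1 + x₁² + m² x₂²)`. -/
def kernel (m : ℝ) (x : ℝ × ℝ) : ℝ := (1 + x.1 ^ 2 + m ^ 2 * x.2 ^ 2)⁻¹

lemma kernel_contDiff (m : ℝ) : ContDiff ℝ (⊤ : ℕ∞) (kernel m) := by
  unfold kernel
  refine ContDiff.inv (by fun_prop) fun x => ?_
  positivity

/-- The Leibniz expansion of `∂₁^i ∂₂^j (Q * kernel m) = ∂₁^i ∂₂^j 1`, for `Q` the quadratic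
denominator. Where an index `i - 1`, `i - 2`, `j - 1` or `j - 2` is truncated, its coefficient
vanishes. -/
lemma kernel_recurrence (m : ℝ) (i j : ℕ) (a b : ℝ) :
    (1 + a ^ 2 + m ^ 2 * b ^ 2) * pd (i, j) (kernel m) (a, b)
      + 2 * i * (a * pd (i - 1, j) (kernel m) (a, b))
      + 2 * j * m ^ 2 * (b * pd (i, j - 1) (kernel m) (a, b))
      + i * (i - 1) * pd (i - 2, j) (kernel m) (a, b)
      + j * (j - 1) * m ^ 2 * pd (i, j - 2) (kernel m) (a, b)
      = if i = 0 ∧ j = 0 then 1 else 0 := by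
  have hA : ∀ i j, ContDiff ℝ (⊤ : ℕ∞) (pd (i, j) (kernel m)) :=
    pd_contDiff (kernel_contDiff m)
  induction i generalizing a with
  | zero =>
    induction j generalizing b with
    | zero =>
      have : (1 + a ^ 2 + m ^ 2 * b ^ 2) ≠ 0 := by positivity
      simp [pd, kernel, this]
    | succ j ih =>
      have d : ∀ j, HasDerivAt (fun t => pd (0, j) (kernel m) (a, t))
          (pd (0, j + 1) (kernel m) (a, b)) b := by
        intro j; rw [pd_zero_succ]; exact hasDerivAt_snd (hA 0 j) a b
      have dQ : HasDerivAt (fun t : ℝ => 1 + a ^ 2 + m ^ 2 * t ^ 2) (m ^ 2 * (2 * b)) b := by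
        simpa using ((hasDerivAt_pow 2 b).const_mul (m ^ 2)).const_add (1 + a ^ 2)
      have D := ((dQ.mul (d j)).add
        (((hasDerivAt_id b).mul (d (j - 1))).const_mul (2 * j * m ^ 2))).add
        ((d (j - 2)).const_mul (j * (j - 1) * m ^ 2))
      have hz := D.unique
        ((hasDerivAt_const b (if (0 : ℕ) = 0 ∧ j = 0 then (1 : ℝ) else 0)).congr_of_eventuallyEq
          (Filter.Eventually.of_forall fun t => by
            have := ih t
            simp at this ⊢
            linarith))
      match j, hz with
      | 0, hz => simp at hz ⊢; linarith
      | 1, hz => simp at hz ⊢; linarith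
      | j + 2, hz =>
        simp at hz ⊢
        linarith
  | succ i ih =>
    have d : ∀ i j, HasDerivAt (fun t => pd (i, j) (kernel m) (t, b))
        (pd (i + 1, j) (kernel m) (a, b)) a := by
      intro i j; rw [pd_succ_left]; exact hasDerivAt_fst (hA i j) a b
    have dQ : HasDerivAt (fun t : ℝ => 1 + t ^ 2 + m ^ 2 * b ^ 2) (2 * a) a := by
      simpa using (((hasDerivAt_pow 2 a).const_add 1).add_const (m ^ 2 * b ^ 2))
    have D := ((((dQ.mul (d i j)).add
      (((hasDerivAt_id a).mul (d (i - 1) j)).const_mul (2 * (i : ℝ)))).add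
      (((d i (j - 1)).const_mul b).const_mul (2 * j * m ^ 2))).add
      ((d (i - 2) j).const_mul ((i : ℝ) * (i - 1)))).add
      ((d i (j - 2)).const_mul (j * (j - 1) * m ^ 2))
    have hz := D.unique
      ((hasDerivAt_const a (if i = 0 ∧ j = 0 then (1 : ℝ) else 0)).congr_of_eventuallyEq
        (Filter.Eventually.of_forall fun t => by
          have := ih t
          simp only [Pi.add_apply, Pi.mul_apply, id] at this ⊢
          linarith))
    match i, hz with
    | 0, hz => simp at hz ⊢; linarith
    | 1, hz => simp at hz ⊢; linarith
    | i + 2, hz =>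
      simp at hz ⊢
      linarith

/-- The Cauchy-type estimate for the kernel, with `s` the square root of its denominator. -/
lemma kernel_bound {m : ℝ} (hm : 1 ≤ m) (a b s : ℝ) (hs : 0 < s)
    (hs2 : s ^ 2 = 1 + a ^ 2 + m ^ 2 * b ^ 2) (n : ℕ) :
    ∀ i j : ℕ, i + j = n → |pd (i, j) (kernel m) (a, b)| * s ^ (i + j + 2)
      ≤ i.factorial * j.factorial * 8 ^ (i + j) * m ^ j := by
  induction n using Nat.strong_induction_on with
  | _ n IH =>
  intro i j hij
  have hm0 : 0 < m := by linarith
  have ha : |a| ≤ s := abs_le_of_sq_le_sq (by nlinarith [sq_nonneg (m * b)]) hs.le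
  have hb : m * |b| ≤ s := by
    rw [← abs_of_pos hm0, ← abs_mul]
    exact abs_le_of_sq_le_sq (by nlinarith [sq_nonneg a]) hs.le
  set A : ℕ → ℕ → ℝ := fun i j => pd (i, j) (kernel m) (a, b) with hA
  set B : ℝ := i.factorial * j.factorial * 8 ^ (i + j) * m ^ j with hB
  have hBpos : 0 < B := by positivity
  have t1 : i * |A (i - 1) j| * s ^ (i + j + 1) ≤ B / 8 := by
    rcases i with _ | i
    · simp; positivity
    · have := IH (i + j) (by omega) i j rfl
      calc ((i + 1 : ℕ) : ℝ) * |A (i + 1 - 1) j| * s ^ (i + 1 + j + 1)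
          = (i + 1 : ℕ) * (|A i j| * s ^ (i + j + 2)) := by
            rw [Nat.add_sub_cancel]; ring
        _ ≤ (i + 1 : ℕ) * (i.factorial * j.factorial * 8 ^ (i + j) * m ^ j) := by
            gcongr
        _ = B / 8 := by rw [hB, Nat.factorial_succ]; push_cast; ring
  have t2 : j * m * |A i (j - 1)| * s ^ (i + j + 1) ≤ B / 8 := by
    rcases j with _ | j
    · simp; positivity
    · have := IH (i + j) (by omega) i j rfl
      calc ((j + 1 : ℕ) : ℝ) * m * |A i (j + 1 - 1)| * s ^ (i + (j + 1) + 1)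
          = (j + 1 : ℕ) * m * (|A i j| * s ^ (i + j + 2)) := by
            rw [Nat.add_sub_cancel]; ring
        _ ≤ (j + 1 : ℕ) * m * (i.factorial * j.factorial * 8 ^ (i + j) * m ^ j) := by
            gcongr
        _ = B / 8 := by rw [hB, Nat.factorial_succ]; push_cast; ring
  have t3 : |(i : ℝ) * (i - 1) * A (i - 2) j| * s ^ (i + j) ≤ B / 64 := by
    rcases i with _ | _ | i
    · simp; positivity
    · simp; positivity
    · have := IH (i + j) (by omega) i j rfl
      calc |((i + 1 + 1 : ℕ) : ℝ) * (((i + 1 + 1 : ℕ) : ℝ) - 1) * A (i + 1 + 1 - 2) j|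
            * s ^ (i + 1 + 1 + j)
          = (i + 2) * (i + 1) * (|A i j| * s ^ (i + j + 2)) := by
            have e : ((i + 1 + 1 : ℕ) : ℝ) * (((i + 1 + 1 : ℕ) : ℝ) - 1) = (i + 2) * (i + 1) := by
              push_cast; ring
            rw [e, abs_mul, abs_of_nonneg (by positivity : (0 : ℝ) ≤ (i + 2) * (i + 1))]
            change _ * |A i j| * _ = _
            ring
        _ ≤ (i + 2) * (i + 1) * (i.factorial * j.factorial * 8 ^ (i + j) * m ^ j) := by
            gcongr
        _ = B / 64 := by rw [hB, Nat.factorial_succ, Nat.factorial_succ]; push_cast; ring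
  have t4 : |(j : ℝ) * (j - 1) * m ^ 2 * A i (j - 2)| * s ^ (i + j) ≤ B / 64 := by
    rcases j with _ | _ | j
    · simp; positivity
    · simp; positivity
    · have := IH (i + j) (by omega) i j rfl
      calc |((j + 1 + 1 : ℕ) : ℝ) * (((j + 1 + 1 : ℕ) : ℝ) - 1) * m ^ 2 * A i (j + 1 + 1 - 2)|
            * s ^ (i + (j + 1 + 1))
          = (j + 2) * (j + 1) * m ^ 2 * (|A i j| * s ^ (i + j + 2)) := by
            have e : ((j + 1 + 1 : ℕ) : ℝ) * (((j + 1 + 1 : ℕ) : ℝ) - 1) = (j + 2) * (j + 1) := by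
              push_cast; ring
            rw [e, abs_mul, abs_of_nonneg (by positivity : (0 : ℝ) ≤ (j + 2) * (j + 1) * m ^ 2)]
            change _ * |A i j| * _ = _
            ring
        _ ≤ (j + 2) * (j + 1) * m ^ 2 * (i.factorial * j.factorial * 8 ^ (i + j) * m ^ j) := by
            gcongr
        _ = B / 64 := by rw [hB, Nat.factorial_succ, Nat.factorial_succ]; push_cast; ring
  by_cases h0 : i = 0 ∧ j = 0
  · obtain ⟨rfl, rfl⟩ := h0
    have hk : A 0 0 = (s ^ 2)⁻¹ := by rw [hs2]; rfl
    change |A 0 0| * s ^ 2 ≤ B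
    rw [hk, abs_of_pos (by positivity), inv_mul_cancel₀ (by positivity)]
    simp [hB]
  · have hr := kernel_recurrence m i j a b
    rw [if_neg h0, ← hs2] at hr
    change s ^ 2 * A i j + 2 * i * (a * A (i - 1) j) + 2 * j * m ^ 2 * (b * A i (j - 1))
      + i * (i - 1) * A (i - 2) j + j * (j - 1) * m ^ 2 * A i (j - 2) = 0 at hr
    have e1 : |2 * (i : ℝ) * (a * A (i - 1) j)| ≤ 2 * s * (i * |A (i - 1) j|) := by
      rw [abs_mul, abs_mul a, abs_of_nonneg (by positivity : (0 : ℝ) ≤ 2 * i)]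
      calc 2 * (i : ℝ) * (|a| * |A (i - 1) j|) ≤ 2 * i * (s * |A (i - 1) j|) := by gcongr
        _ = _ := by ring
    have e2 : |2 * (j : ℝ) * m ^ 2 * (b * A i (j - 1))| ≤ 2 * s * (j * m * |A i (j - 1)|) := by
      rw [abs_mul, abs_mul b, abs_of_nonneg (by positivity : (0 : ℝ) ≤ 2 * j * m ^ 2)]
      calc 2 * (j : ℝ) * m ^ 2 * (|b| * |A i (j - 1)|)
          = 2 * j * m * ((m * |b|) * |A i (j - 1)|) := by ring
        _ ≤ 2 * j * m * (s * |A i (j - 1)|) := by gcongr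
        _ = _ := by ring
    have e0 : s ^ 2 * |A i j| ≤ 2 * s * (i * |A (i - 1) j|) + 2 * s * (j * m * |A i (j - 1)|)
        + |(i : ℝ) * (i - 1) * A (i - 2) j| + |(j : ℝ) * (j - 1) * m ^ 2 * A i (j - 2)| := by
      have : s ^ 2 * |A i j| = |s ^ 2 * A i j| := by
        rw [abs_mul, abs_of_pos (by positivity : 0 < s ^ 2)]
      rw [this]
      have hr' : s ^ 2 * A i j = -(2 * i * (a * A (i - 1) j) + 2 * j * m ^ 2 * (b * A i (j - 1))
        + i * (i - 1) * A (i - 2) j + j * (j - 1) * m ^ 2 * A i (j - 2)) := by linarith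
      rw [hr', abs_neg]
      refine (abs_add_le _ _).trans (add_le_add ?_ le_rfl)
      refine (abs_add_le _ _).trans (add_le_add ?_ le_rfl)
      exact (abs_add_le _ _).trans (add_le_add e1 e2)
    calc |A i j| * s ^ (i + j + 2) = (s ^ 2 * |A i j|) * s ^ (i + j) := by ring
      _ ≤ _ := mul_le_mul_of_nonneg_right e0 (by positivity)
      _ = 2 * (i * |A (i - 1) j| * s ^ (i + j + 1))
          + 2 * (j * m * |A i (j - 1)| * s ^ (i + j + 1))
          + |(i : ℝ) * (i - 1) * A (i - 2) j| * s ^ (i + j)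
          + |(j : ℝ) * (j - 1) * m ^ 2 * A i (j - 2)| * s ^ (i + j) := by ring
      _ ≤ B := by linarith

/-- `kernel_bound` with the denominator replaced by `1 + x₁² + x₂²`. -/
lemma kernel_bound' {m : ℝ} (hm : 1 ≤ m) (x : ℝ × ℝ) (i j : ℕ) :
    |pd (i, j) (kernel m) x|
      ≤ i.factorial * j.factorial * 8 ^ (i + j) * m ^ j
        / √(1 + x.1 ^ 2 + x.2 ^ 2) ^ (i + j + 2) := by
  obtain ⟨a, b⟩ := x
  have hm2 : 1 ≤ m ^ 2 := one_le_pow₀ hm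
  rw [le_div_iff₀ (by positivity)]
  refine le_trans ?_ (kernel_bound hm a b √(1 + a ^ 2 + m ^ 2 * b ^ 2) (by positivity)
    (Real.sq_sqrt (by positivity)) _ i j rfl)
  gcongr
  nlinarith [sq_nonneg b]

lemma kernel_origin (m : ℝ) (n : ℕ) :
    pd (0, 2 * n) (kernel m) (0, 0) = (-1) ^ n * ((2 * n).factorial * m ^ (2 * n)) := by
  induction n with
  | zero => simp [pd, kernel]
  | succ n ih =>
    have h := kernel_recurrence m 0 (2 * n + 2) 0 0
    simp at h
    rw [show 2 * (n + 1) = 2 * n + 2 by ring, eq_neg_of_add_eq_zero_left h, ih,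
      Nat.factorial_succ, Nat.factorial_succ]
    push_cast
    ring

/-! ### The weights -/

/-- The quotient `M (k+1) / M k`. -/
def ratio (M : ℕ → ℝ) (k : ℕ) : ℝ := M (k + 1) / M k

/-- The weight of `kernel (ratio M k)` in the series. -/
def weight (M : ℕ → ℝ) (k : ℕ) : ℝ := (1 / 2) ^ k * (M k / ratio M k ^ k)

lemma one_le_ratio {M : ℕ → ℝ} (hMpos : ∀ k, 0 < M k) (hMmono : Monotone M) (k : ℕ) :
    1 ≤ ratio M k :=
  (one_le_div (hMpos k)).2 (hMmono k.le_succ)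

lemma weight_nonneg {M : ℕ → ℝ} (hMpos : ∀ k, 0 < M k) (k : ℕ) : 0 ≤ weight M k := by
  have h0 := hMpos k
  have h1 := hMpos (k + 1)
  unfold weight ratio
  positivity

lemma succ_eq_mul_ratio {M : ℕ → ℝ} (hMpos : ∀ k, 0 < M k) (k : ℕ) :
    M (k + 1) = M k * ratio M k := by
  have h0 := (hMpos k).ne'
  unfold ratio
  field_simp

lemma mul_ratio_pow_le {M : ℕ → ℝ} (hMpos : ∀ k, 0 < M k) (hMlc : LogConvexSeq M) (k d : ℕ) :
    M k * ratio M k ^ d ≤ M (k + d) := by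
  have hr : ∀ k, 0 < ratio M k := fun k => div_pos (hMpos _) (hMpos _)
  induction d with
  | zero => simp
  | succ d ih =>
    have hmono : ratio M k ≤ ratio M (k + d) := hMlc (Nat.le_add_right k d)
    calc M k * ratio M k ^ (d + 1) = M k * ratio M k ^ d * ratio M k := by ring
      _ ≤ M (k + d) * ratio M (k + d) := by
        gcongr
        · exact (hr k).le
        · exact (hMpos _).le
      _ = M (k + (d + 1)) := (succ_eq_mul_ratio hMpos _).symm

lemma le_mul_ratio_pow {M : ℕ → ℝ} (hMpos : ∀ k, 0 < M k) (hMlc : LogConvexSeq M) (j d : ℕ) :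
    M (j + d) ≤ M j * ratio M (j + d) ^ d := by
  have hr : ∀ k, 0 < ratio M k := fun k => div_pos (hMpos _) (hMpos _)
  induction d with
  | zero => simp
  | succ d ih =>
    have hmono : ratio M (j + d) ≤ ratio M (j + (d + 1)) := hMlc (by omega)
    have h1 := hr (j + d)
    have h2 := hMpos j
    calc M (j + (d + 1)) = M (j + d) * ratio M (j + d) := succ_eq_mul_ratio hMpos _
      _ ≤ M j * ratio M (j + d) ^ d * ratio M (j + d) := by gcongr
      _ = M j * ratio M (j + d) ^ (d + 1) := by ring
      _ ≤ M j * ratio M (j + (d + 1)) ^ (d + 1) := by gcongr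

lemma weight_mul_pow_le {M : ℕ → ℝ} (hMpos : ∀ k, 0 < M k) (hMlc : LogConvexSeq M) (k j : ℕ) :
    weight M k * ratio M k ^ j ≤ (1 / 2) ^ k * M j := by
  have hr : 0 < ratio M k := div_pos (hMpos _) (hMpos _)
  rw [weight, mul_assoc]
  refine mul_le_mul_of_nonneg_left ?_ (by positivity)
  rw [div_mul_eq_mul_div, div_le_iff₀ (by positivity)]
  rcases le_total k j with h | h
  · obtain ⟨d, rfl⟩ := Nat.exists_eq_add_of_le h
    calc M k * ratio M k ^ (k + d) = M k * ratio M k ^ d * ratio M k ^ k := by ring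
      _ ≤ _ := by gcongr; exact mul_ratio_pow_le hMpos hMlc k d
  · obtain ⟨d, rfl⟩ := Nat.exists_eq_add_of_le h
    calc M (j + d) * ratio M (j + d) ^ j
        ≤ M j * ratio M (j + d) ^ d * ratio M (j + d) ^ j := by
          gcongr; exact le_mul_ratio_pow hMpos hMlc j d
      _ = _ := by ring

lemma weight_mul_pow_self {M : ℕ → ℝ} (hMpos : ∀ k, 0 < M k) (k : ℕ) :
    weight M k * ratio M k ^ k = (1 / 2) ^ k * M k := by
  have hr : 0 < ratio M k := div_pos (hMpos _) (hMpos _)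
  unfold weight
  field_simp

/-! ### The series -/

/-- The termwise derivative `∑ c k * ∂^(i,j) (g (m k))` of the series. -/
def series (M : ℕ → ℝ) (i j : ℕ) (x : ℝ × ℝ) : ℝ :=
  ∑' k, weight M k * pd (i, j) (kernel (ratio M k)) x

section Series

variable {M : ℕ → ℝ}

lemma term_bound (hMpos : ∀ k, 0 < M k) (hMmono : Monotone M) (hMlc : LogConvexSeq M)
    (i j k : ℕ) (x : ℝ × ℝ) :
    |weight M k * pd (i, j) (kernel (ratio M k)) x| ≤
      (1 / 2) ^ k * (i.factorial * j.factorial * 8 ^ (i + j) * M j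
        / √(1 + x.1 ^ 2 + x.2 ^ 2) ^ (i + j + 2)) := by
  rw [abs_mul, abs_of_nonneg (weight_nonneg hMpos k)]
  calc weight M k * |pd (i, j) (kernel (ratio M k)) x|
      ≤ weight M k * (i.factorial * j.factorial * 8 ^ (i + j) * ratio M k ^ j
        / √(1 + x.1 ^ 2 + x.2 ^ 2) ^ (i + j + 2)) :=
        mul_le_mul_of_nonneg_left (kernel_bound' (one_le_ratio hMpos hMmono k) x i j)
          (weight_nonneg hMpos k)
    _ = (weight M k * ratio M k ^ j) * (i.factorial * j.factorial * 8 ^ (i + j)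
        / √(1 + x.1 ^ 2 + x.2 ^ 2) ^ (i + j + 2)) := by ring
    _ ≤ ((1 / 2) ^ k * M j) * (i.factorial * j.factorial * 8 ^ (i + j)
        / √(1 + x.1 ^ 2 + x.2 ^ 2) ^ (i + j + 2)) := by
        exact mul_le_mul_of_nonneg_right (weight_mul_pow_le hMpos hMlc k j) (by positivity)
    _ = _ := by ring

lemma term_bound_uniform (hMpos : ∀ k, 0 < M k) (hMmono : Monotone M) (hMlc : LogConvexSeq M)
    (i j k : ℕ) (x : ℝ × ℝ) :
    |weight M k * pd (i, j) (kernel (ratio M k)) x| ≤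
      (1 / 2) ^ k * (i.factorial * j.factorial * 8 ^ (i + j) * M j) := by
  refine (term_bound hMpos hMmono hMlc i j k x).trans ?_
  have := hMpos j
  refine mul_le_mul_of_nonneg_left (div_le_self (by positivity) (one_le_pow₀ ?_)) (by positivity)
  rw [Real.one_le_sqrt]
  nlinarith [sq_nonneg x.1, sq_nonneg x.2]

lemma term_summable (hMpos : ∀ k, 0 < M k) (hMmono : Monotone M) (hMlc : LogConvexSeq M)
    (i j : ℕ) (x : ℝ × ℝ) :
    Summable fun k => weight M k * pd (i, j) (kernel (ratio M k)) x :=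
  Summable.of_norm_bounded (summable_geometric_two.mul_right _)
    fun k => term_bound_uniform hMpos hMmono hMlc i j k x

lemma series_hasFDerivAt (hMpos : ∀ k, 0 < M k) (hMmono : Monotone M) (hMlc : LogConvexSeq M)
    (i j : ℕ) (x : ℝ × ℝ) :
    HasFDerivAt (series M i j) (rowCLM (series M (i + 1) j x) (series M i (j + 1) x)) x := by
  have s1 := term_summable hMpos hMmono hMlc (i + 1) j x
  have s2 := term_summable hMpos hMmono hMlc i (j + 1) x
  have H := hasFDerivAt_tsum (𝕜 := ℝ)
    (f := fun k x => weight M k * pd (i, j) (kernel (ratio M k)) x)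
    (f' := fun k x => rowCLM (weight M k * pd (i + 1, j) (kernel (ratio M k)) x)
      (weight M k * pd (i, j + 1) (kernel (ratio M k)) x))
    (u := fun k => (1 / 2) ^ k * ((i + 1).factorial * j.factorial * 8 ^ (i + 1 + j) * M j)
      + (1 / 2) ^ k * (i.factorial * (j + 1).factorial * 8 ^ (i + (j + 1)) * M (j + 1)))
    ((summable_geometric_two.mul_right _).add (summable_geometric_two.mul_right _))
    (fun k y => by
      have hk := kernel_contDiff (ratio M k)
      have h := (hasFDerivAt_rowCLM (pd_contDiff hk i j) y).const_mul (weight M k)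
      rw [← pd_succ_left, ← pd_succ_right hk] at h
      have e : weight M k • rowCLM (pd (i + 1, j) (kernel (ratio M k)) y)
          (pd (i, j + 1) (kernel (ratio M k)) y)
          = rowCLM (weight M k * pd (i + 1, j) (kernel (ratio M k)) y)
          (weight M k * pd (i, j + 1) (kernel (ratio M k)) y) := by
        simp only [rowCLM, smul_add, smul_smul]
      rwa [e] at h)
    (fun k y => (norm_rowCLM_le _ _).trans (add_le_add
      (term_bound_uniform hMpos hMmono hMlc (i + 1) j k y)
      (term_bound_uniform hMpos hMmono hMlc i (j + 1) k y)))
    (term_summable hMpos hMmono hMlc i j 0) x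
  have e : ∑' k, rowCLM (weight M k * pd (i + 1, j) (kernel (ratio M k)) x)
      (weight M k * pd (i, j + 1) (kernel (ratio M k)) x)
      = rowCLM (series M (i + 1) j x) (series M i (j + 1) x) := by
    simp only [rowCLM]
    rw [(s1.smul_const _).tsum_add (s2.smul_const _), s1.tsum_smul_const, s2.tsum_smul_const]
    rfl
  rwa [e] at H

lemma series_contDiff (hMpos : ∀ k, 0 < M k) (hMmono : Monotone M) (hMlc : LogConvexSeq M)
    (i j : ℕ) : ContDiff ℝ (⊤ : ℕ∞) (series M i j) := by
  rw [contDiff_infty]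
  intro n
  induction n generalizing i j with
  | zero =>
    rw [Nat.cast_zero, contDiff_zero, continuous_iff_continuousAt]
    exact fun x => (series_hasFDerivAt hMpos hMmono hMlc i j x).continuousAt
  | succ n ih =>
    rw [Nat.cast_add, Nat.cast_one, contDiff_succ_iff_hasFDerivAt]
    exact ⟨_, ((ih (i + 1) j).smul contDiff_const).add ((ih i (j + 1)).smul contDiff_const),
      series_hasFDerivAt hMpos hMmono hMlc i j⟩

lemma pd_series (hMpos : ∀ k, 0 < M k) (hMmono : Monotone M) (hMlc : LogConvexSeq M)
    (i j : ℕ) : pd (i, j) (series M 0 0) = series M i j := by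
  have h1 : ∀ i j, pd1 (series M i j) = series M (i + 1) j := fun i j => by
    funext x
    rw [pd1, (series_hasFDerivAt hMpos hMmono hMlc i j x).fderiv, rowCLM_apply]; simp
  have h2 : ∀ i j, pd2 (series M i j) = series M i (j + 1) := fun i j => by
    funext x
    rw [pd2, (series_hasFDerivAt hMpos hMmono hMlc i j x).fderiv, rowCLM_apply]; simp
  induction i with
  | zero =>
    induction j with
    | zero => rfl
    | succ j ih => rw [pd_zero_succ, ih, h2]
  | succ i ih => rw [pd_succ_left, ih, h1]

lemma abs_series_le (hMpos : ∀ k, 0 < M k) (hMmono : Monotone M) (hMlc : LogConvexSeq M)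
    (i j : ℕ) (x : ℝ × ℝ) :
    |series M i j x| ≤ 2 * (i.factorial * j.factorial * 8 ^ (i + j) * M j
        / √(1 + x.1 ^ 2 + x.2 ^ 2) ^ (i + j + 2)) := by
  rw [← Real.norm_eq_abs, series]
  exact tsum_of_norm_bounded (hasSum_geometric_two.mul_right _)
    fun k => term_bound hMpos hMmono hMlc i j k x

lemma le_abs_series_origin (hMpos : ∀ k, 0 < M k) (hMmono : Monotone M) (hMlc : LogConvexSeq M)
    (n : ℕ) : ((2 * n).factorial : ℝ) * M (2 * n) / 2 ^ (2 * n) ≤ |series M 0 (2 * n) (0, 0)| := by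
  have hs := term_summable hMpos hMmono hMlc 0 (2 * n) (0, 0)
  have e : ∀ k, weight M k * pd (0, 2 * n) (kernel (ratio M k)) (0, 0)
      = (-1) ^ n * (weight M k * ((2 * n).factorial * ratio M k ^ (2 * n))) := fun k => by
    rw [kernel_origin]; ring
  simp only [e] at hs
  have hs' : Summable fun k => weight M k * ((2 * n).factorial * ratio M k ^ (2 * n)) :=
    (summable_mul_left_iff (by simp)).1 hs
  rw [series]
  simp only [e]
  rw [tsum_mul_left, abs_mul, abs_pow, abs_neg, abs_one, one_pow, one_mul]
  refine le_trans ?_ (le_abs_self _)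
  refine le_trans (le_of_eq ?_) (hs'.le_tsum (2 * n) fun k _ => ?_)
  · have := weight_mul_pow_self hMpos (2 * n)
    calc ((2 * n).factorial : ℝ) * M (2 * n) / 2 ^ (2 * n)
        = (2 * n).factorial * ((1 / 2) ^ (2 * n) * M (2 * n)) := by
          rw [one_div, inv_pow]; ring
      _ = _ := by rw [← this]; ring
  · have h1 := weight_nonneg hMpos k
    have h2 := one_le_ratio hMpos hMmono k
    positivity

end Series

/-- Proposition 3.6 (base function): there exists `h ∈ C^∞(ℝ²)` with
(i) `|∂^α h(x)| ≤ 64·8^{|α|+1} α! M_{α₂}/(1 + x₁² + x₂²)^{1+|α|/2}` and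
(ii) `|∂^{2n}h/∂x₂^{2n}(0,0)| ≥ (2n)! M_{2n}/2^{2n}`. -/
theorem exists_base_function (M : ℕ → ℝ) (hMpos : ∀ k, 0 < M k) (hMmono : Monotone M)
    (hMlc : LogConvexSeq M) (hM0 : M 0 = 1) :
    ∃ h : ℝ × ℝ → ℝ, ContDiff ℝ (⊤ : ℕ∞) h ∧
      (∀ x : ℝ × ℝ, ∀ α : ℕ × ℕ,
        |pd α h x| ≤ 64 * 8 ^ (α.1 + α.2 + 1) * (Nat.factorial α.1 * Nat.factorial α.2) *
          M α.2 / (1 + x.1 ^ 2 + x.2 ^ 2) ^ (1 + ((α.1 + α.2 : ℕ) : ℝ) / 2)) ∧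
      (∀ n : ℕ, (Nat.factorial (2 * n) : ℝ) * M (2 * n) / 2 ^ (2 * n) ≤
        |pd (0, 2 * n) h (0, 0)|) := by
  refine ⟨series M 0 0, series_contDiff hMpos hMmono hMlc 0 0, ?_, ?_⟩
  · rintro x ⟨i, j⟩
    rw [pd_series hMpos hMmono hMlc]
    refine (abs_series_le hMpos hMmono hMlc i j x).trans ?_
    have hQ : (0 : ℝ) ≤ 1 + x.1 ^ 2 + x.2 ^ 2 := by positivity
    have e : (1 + x.1 ^ 2 + x.2 ^ 2) ^ (1 + ((i + j : ℕ) : ℝ) / 2)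
        = √(1 + x.1 ^ 2 + x.2 ^ 2) ^ (i + j + 2) := by
      rw [Real.sqrt_eq_rpow, ← Real.rpow_mul_natCast hQ]
      congr 1
      push_cast
      ring
    have hM := hMpos j
    simp only [e]
    rw [← mul_div_assoc]
    gcongr ?_ / _
    have hP : 0 ≤ (i.factorial : ℝ) * j.factorial * 8 ^ (i + j) * M j := by positivity
    calc 2 * ((i.factorial : ℝ) * j.factorial * 8 ^ (i + j) * M j)
        ≤ 512 * ((i.factorial : ℝ) * j.factorial * 8 ^ (i + j) * M j) := by linarith
      _ = _ := by ring
  · intro n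
    rw [pd_series hMpos hMmono hMlc]
    exact le_abs_series_origin hMpos hMmono hMlc n
end
end
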